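/- Let m : 𝕋^ν → ℝ be a non-constant real analytic function. Then the set of n-tuples (f₁,…,f_n) of C^∞ functions on 𝕋^ν such that ∇m(p_k) ≠ ∇m(p_l) for all p_k ∈ supp f_k, p_l ∈ supp f_l, k ≠ l, spans a dense subspace of the n-fold symmetric tensor power of L²(𝕋^ν): symmetrized tensors (f₁⊗⋯⊗f_n)^{sym} over such tuples are total in Sym^n L²(𝕋^ν). -/

import Mathlib

open MeasureTheory
open scoped Pointwise

theorem aux_null {E : Type*} [NormedAddCommGroup E] [NormedSpace ℝ E] [FiniteDimensional ℝ E]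
    [MeasurableSpace E] [BorelSpace E] (μ : Measure E) [μ.IsAddHaarMeasure]
    (F : E → ℝ) (hF : ∀ x, AnalyticAt ℝ F x) (x0 : E) (h0 : F x0 ≠ 0) :
    ∀ᵐ x ∂μ, F x ≠ 0 := by
  have hFc : Continuous F := continuous_iff_continuousAt.2 fun x => (hF x).continuousAt
  have hs : ∀ x : E, ∀ᵐ s : ℝ, F (x0 + s • x) ≠ 0 := by
    intro x
    have han : AnalyticOnNhd ℝ (fun s : ℝ => F (x0 + s • x)) Set.univ := by
      intro s _
      have h1 : AnalyticAt ℝ (fun s : ℝ => x0 + s • x) s := by fun_prop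
      exact (hF _).fun_comp h1
    have := han.preimage_zero_mem_codiscrete (x := 0) (by simpa using h0)
    have h2 := ae_restrict_le_codiscreteWithin (μ := (volume : Measure ℝ)) MeasurableSet.univ this
    rw [Measure.restrict_univ] at h2
    filter_upwards [h2] with s hs
    simpa using hs
  have hmeas : MeasurableSet {z : E × ℝ | F (x0 + z.2 • z.1) ≠ 0} := by
    have : Continuous fun z : E × ℝ => F (x0 + z.2 • z.1) := by fun_prop
    exact (isOpen_ne.preimage this).measurableSet
  have h3 := (Measure.ae_ae_comm (μ := μ) (ν := (volume : Measure ℝ))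
    (p := fun x s => F (x0 + s • x) ≠ 0) hmeas).1 (Filter.Eventually.of_forall hs)
  have h4 : ∀ᵐ s : ℝ, s ≠ 0 := by simp [ae_iff]
  obtain ⟨s, h5, h6⟩ := (h3.and h4).exists
  rw [ae_iff] at h5 ⊢
  have : {x | ¬ F x ≠ 0} ⊆ (fun y => x0 + y) '' (s • {x | ¬ F (x0 + s • x) ≠ 0}) := by
    intro x hx
    refine ⟨x - x0, ?_, by simp⟩
    refine ⟨s⁻¹ • (x - x0), ?_, ?_⟩
    · simpa [smul_smul, h6] using hx
    · simp [smul_smul, h6]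
  refine measure_mono_null this ?_
  rw [Set.image_add_left, measure_preimage_add, Measure.addHaar_smul, h5, mul_zero]

theorem aux_grad {ν : ℕ}
    (m : (Fin ν → ℝ) → ℝ)
    (hmper : ∀ (p : Fin ν → ℝ) (k : Fin ν → ℤ), m (fun i => p i + k i) = m p)
    (hman : ∀ p, AnalyticAt ℝ m p)
    (hmnc : ∃ p q, m p ≠ m q) : ∃ v w e, fderiv ℝ m v e ≠ fderiv ℝ m w e := by
  by_contra! hcon
  obtain ⟨p, q, hpq⟩ := hmnc
  set L := fderiv ℝ m 0 with hL
  have hd : Differentiable ℝ m := fun x => (hman x).differentiableAt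
  have hconst : ∀ x y, m x - L x = m y - L y := by
    refine is_const_of_fderiv_eq_zero (𝕜 := ℝ) (f := fun x => m x - L x) (by fun_prop) ?_
    intro x
    rw [fderiv_fun_sub (hd x) (by fun_prop), ContinuousLinearMap.fderiv, sub_eq_zero]
    ext1
    exact hcon _ _ _
  have hLi : ∀ i, L (Pi.single i 1) = 0 := by
    intro i
    have h1 := hmper 0 (Pi.single i 1)
    have h2 := hconst (fun j => (0 : Fin ν → ℝ) j + ((Pi.single i 1 : Fin ν → ℤ) j : ℝ)) 0
    have h3 : (fun j => (0 : Fin ν → ℝ) j + ((Pi.single i 1 : Fin ν → ℤ) j : ℝ)) = Pi.single i 1 := by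
      ext j
      by_cases h : j = i
      · subst h; simp
      · simp [h]
    rw [h1, h3] at h2
    simpa using h2
  have hLz : L = 0 := by
    apply ContinuousLinearMap.coe_injective
    refine (Pi.basisFun ℝ (Fin ν)).ext fun i => ?_
    simpa using hLi i
  have := hconst p q
  simp [hLz] at this
  exact hpq this

theorem aux_fder_per {ν : ℕ}
    (m : (Fin ν → ℝ) → ℝ)
    (hmper : ∀ (p : Fin ν → ℝ) (k : Fin ν → ℤ), m (fun i => p i + k i) = m p)
    (p : Fin ν → ℝ) (k : Fin ν → ℤ) :
    fderiv ℝ m (fun i => p i + k i) = fderiv ℝ m p := by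
  have h : (fun x => m (x + fun i => (k i : ℝ))) = m := by
    funext x; exact hmper x k
  have := fderiv_comp_add_right (𝕜 := ℝ) (f := m) (x := p) (fun i => (k i : ℝ))
  rw [h] at this
  exact this.symm

theorem aux_ae {ν n : ℕ}
    (m : (Fin ν → ℝ) → ℝ)
    (hmper : ∀ (p : Fin ν → ℝ) (k : Fin ν → ℤ), m (fun i => p i + k i) = m p)
    (hman : ∀ p, AnalyticAt ℝ m p)
    (hmnc : ∃ p q, m p ≠ m q) :
    ∀ᵐ p : Fin n → Fin ν → ℝ, ∀ k l, k ≠ l → fderiv ℝ m (p k) ≠ fderiv ℝ m (p l) := by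
  obtain ⟨v, w, e, hvw⟩ := aux_grad m hmper hman hmnc
  rw [ae_all_iff]; intro k
  rw [ae_all_iff]; intro l
  by_cases hkl : k = l
  · simp [hkl]
  have hfd : ∀ x, AnalyticAt ℝ (fun x => fderiv ℝ m x e) x := fun x =>
    ((ContinuousLinearMap.apply ℝ ℝ e).analyticAt _).fun_comp (hman x).fderiv
  have hproj : ∀ (k : Fin n) (p : Fin n → Fin ν → ℝ), AnalyticAt ℝ (fun p : Fin n → Fin ν → ℝ => p k) p :=
    fun k p => (ContinuousLinearMap.proj (R := ℝ) (φ := fun _ : Fin n => Fin ν → ℝ) k).analyticAt p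
  have := aux_null (volume : Measure (Fin n → Fin ν → ℝ))
    (fun p => fderiv ℝ m (p k) e - fderiv ℝ m (p l) e)
    (fun p => (AnalyticAt.fun_comp (f := fun p : Fin n → Fin ν → ℝ => p k) (hfd (p k)) (hproj k p)).sub (AnalyticAt.fun_comp (f := fun p : Fin n → Fin ν → ℝ => p l) (hfd (p l)) (hproj l p)))
    (fun i => if i = k then v else w) (by simp [Ne.symm hkl, sub_eq_zero, hvw])
  filter_upwards [this] with p hp _ heq
  exact hp (by simp [heq])


theorem aux_pou (ν : ℕ) (r : ℝ) (hr : 0 < r) :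
    ∃ (A : Finset (Fin ν → ℝ)) (ψ : (Fin ν → ℝ) → (Fin ν → ℝ) → ℝ),
      (∀ a ∈ A, ∀ i, a i ∈ Set.Icc (0:ℝ) 1) ∧
      (∀ a, ContDiff ℝ (⊤ : ℕ∞) (ψ a)) ∧
      (∀ a (p : Fin ν → ℝ) (l : Fin ν → ℤ), ψ a (fun i => p i + l i) = ψ a p) ∧
      (∀ a p, 0 ≤ ψ a p) ∧
      (∀ p, ∑ a ∈ A, ψ a p = 1) ∧
      (∀ a, ∀ p ∈ tsupport (ψ a), ∃ l : Fin ν → ℤ, ∀ i, |p i - (a i + l i)| ≤ r) := by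
  let ε := 8 * r ^ 2
  have hε : 0 < ε := by positivity
  let D : (Fin ν → ℝ) → (Fin ν → ℝ) → ℝ := fun a p => ∑ i, (1 - Real.cos (2 * Real.pi * (p i - a i)))
  have hDper : ∀ a (p : Fin ν → ℝ) (l : Fin ν → ℤ), D a (fun i => p i + l i) = D a p := by
    intro a p l
    refine Finset.sum_congr rfl fun i _ => ?_
    rw [← Real.cos_add_int_mul_two_pi (2 * Real.pi * (p i - a i)) (l i)]
    congr 2; ring
  have hDsm : ∀ a, ContDiff ℝ (⊤ : ℕ∞) (D a) := by
    intro a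
    refine ContDiff.sum fun i _ => ?_
    fun_prop
  have hDz : ∀ a, D a a = 0 := by intro a; simp [D]
  have hDr : ∀ a p, D a p ≤ ε → ∃ l : Fin ν → ℤ, ∀ i, |p i - (a i + l i)| ≤ r := by
    intro a p h
    refine ⟨fun i => round (p i - a i), fun i => ?_⟩
    set x := p i - (a i + round (p i - a i)) with hx
    have hx2 : |x| ≤ 1 / 2 := by
      have := abs_sub_round (p i - a i)
      rwa [sub_sub] at this
    have hcos : Real.cos (2 * Real.pi * (p i - a i)) = Real.cos (2 * Real.pi * x) := by
      rw [← Real.cos_sub_int_mul_two_pi (2 * Real.pi * (p i - a i)) (round (p i - a i))]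
      congr 1; rw [hx]; ring
    have h1 : 1 - Real.cos (2 * Real.pi * (p i - a i)) ≤ ε := by
      refine le_trans ?_ h
      exact Finset.single_le_sum (f := fun i => 1 - Real.cos (2 * Real.pi * (p i - a i)))
        (fun i _ => sub_nonneg.2 (Real.cos_le_one _)) (Finset.mem_univ i)
    have h2 := Real.cos_le_one_sub_mul_cos_sq (x := 2 * Real.pi * x) (by
      rw [abs_mul, abs_of_pos (by positivity)]
      nlinarith [Real.pi_pos])
    have h3 : 2 / Real.pi ^ 2 * (2 * Real.pi * x) ^ 2 = 8 * x ^ 2 := by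
      field_simp; ring
    rw [h3, ← hcos] at h2
    refine abs_le_of_sq_le_sq (by nlinarith [h1, h2, show ε = 8 * r ^ 2 from rfl]) hr.le |> fun h => h
  let K : Set (Fin ν → ℝ) := Set.Icc 0 1
  have hK : IsCompact K := isCompact_Icc
  obtain ⟨A, hAK, hA⟩ := hK.elim_nhds_subcover (fun a => {p | D a p < ε}) (by
    intro a _
    exact (isOpen_lt (hDsm a).continuous continuous_const).mem_nhds (by simp [hDz, hε]))
  let θ : (Fin ν → ℝ) → (Fin ν → ℝ) → ℝ := fun a p => expNegInvGlue (ε - D a p)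
  have hθ0 : ∀ a p, 0 ≤ θ a p := fun a p => expNegInvGlue.nonneg _
  have hθsm : ∀ a, ContDiff ℝ (⊤ : ℕ∞) (θ a) := fun a =>
    (expNegInvGlue.contDiff (n := ⊤)).comp (contDiff_const.sub (hDsm a))
  have hθper : ∀ a (p : Fin ν → ℝ) (l : Fin ν → ℤ), θ a (fun i => p i + l i) = θ a p := by
    intro a p l
    simp only [θ, hDper]
  have hpos : ∀ p, 0 < ∑ a ∈ A, θ a p := by
    intro p
    have hf : (fun i => Int.fract (p i)) ∈ K :=
      ⟨fun i => Int.fract_nonneg _, fun i => (Int.fract_lt_one _).le⟩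
    have := hA hf
    simp only [Set.mem_iUnion, Set.mem_ofPred_eq, exists_prop] at this
    obtain ⟨a, ha, hlt⟩ := this
    have e : D a p = D a (fun i => Int.fract (p i)) := by
      have := hDper a (fun i => Int.fract (p i)) (fun i => ⌊p i⌋)
      simpa only [Int.fract_add_floor] using this
    refine Finset.sum_pos' (fun a _ => hθ0 a p) ⟨a, ha, expNegInvGlue.pos_of_pos ?_⟩
    rw [e]; linarith
  refine ⟨A, fun a p => θ a p / ∑ b ∈ A, θ b p, ?_, ?_, ?_, ?_, ?_, ?_⟩
  · intro a ha i
    exact ⟨(hAK a ha).1 i, (hAK a ha).2 i⟩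
  · intro a
    exact (hθsm a).div (ContDiff.sum fun b _ => hθsm b) (fun p => (hpos p).ne')
  · intro a p l
    simp only [hθper]
  · intro a p
    exact div_nonneg (hθ0 a p) (hpos p).le
  · intro p
    rw [← Finset.sum_div, div_self (hpos p).ne']
  · intro a p hp
    apply hDr
    have hcl : IsClosed {p | D a p ≤ ε} := isClosed_le (hDsm a).continuous continuous_const
    refine (closure_minimal ?_ hcl) hp
    intro q hq
    by_contra hlt
    simp only [Set.mem_ofPred_eq, not_le] at hlt
    apply hq
    have : θ a q = 0 := expNegInvGlue.zero_of_nonpos (by linarith)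
    simp [this]

theorem aux_approx {ν n : ℕ}
    (V : (Fin ν → ℝ) → ((Fin ν → ℝ) →L[ℝ] ℝ))
    (hV : ∀ (p : Fin ν → ℝ) (k : Fin ν → ℤ), V (fun i => p i + k i) = V p)
    (G : (Fin n → Fin ν → ℝ) → ℂ)
    (hG : ∀ (p : Fin n → Fin ν → ℝ) (k : Fin n → Fin ν → ℤ),
        G (fun a i => p a i + k a i) = G p) (r : ℝ) (hr : 0 < r) :
    ∃ (N : ℕ) (c : Fin N → ℂ) (f : Fin N → Fin n → (Fin ν → ℝ) → ℂ),
        (∀ j k, ContDiff ℝ (⊤ : ℕ∞) (f j k)) ∧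
        (∀ j k (p : Fin ν → ℝ) (l : Fin ν → ℤ),
          f j k (fun i => p i + l i) = f j k p) ∧
        (∀ j, ∀ k l, k ≠ l → ∀ p ∈ tsupport (f j k), ∀ q ∈ tsupport (f j l),
          V p ≠ V q) ∧
        (∀ C, (∀ p : Fin n → Fin ν → ℝ, (∀ a i, p a i ∈ Set.Icc (0:ℝ) 1) → ‖G p‖ ≤ C) →
          ∀ p : Fin n → Fin ν → ℝ, ‖∑ j, c j * ∏ k, f j k (p k)‖ ≤ C) ∧
        (∀ (p : Fin n → Fin ν → ℝ) (η : ℝ), 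
          (∀ p' : Fin n → Fin ν → ℝ, (∀ a i, |p a i - p' a i| ≤ r) → ‖G p' - G p‖ ≤ η) →
          (∀ x y k l, k ≠ l → (∀ i, |x i - p k i| ≤ 2 * r) → (∀ i, |y i - p l i| ≤ 2 * r) →
            V x ≠ V y) →
          ‖(∑ j, c j * ∏ k, f j k (p k)) - G p‖ ≤ η) := by
  classical
  obtain ⟨A, ψ, hA, hsm, hper, h0, h1, hsupp⟩ := aux_pou ν r hr
  let T : Finset (Fin n → Fin ν → ℝ) := Fintype.piFinset fun _ => A
  let good : (Fin n → Fin ν → ℝ) → Prop := fun a =>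
    ∀ k l, k ≠ l → ∀ p ∈ tsupport (ψ (a k)), ∀ q ∈ tsupport (ψ (a l)), V p ≠ V q
  let S := T.filter good
  let W : (Fin n → Fin ν → ℝ) → (Fin n → Fin ν → ℝ) → ℝ := fun a p => ∏ k, ψ (a k) (p k)
  have hW0 : ∀ a p, 0 ≤ W a p := fun a p => Finset.prod_nonneg fun k _ => h0 _ _
  have hW1 : ∀ p, ∑ a ∈ T, W a p = 1 := by
    intro p
    have := Finset.prod_univ_sum (fun _ : Fin n => A) (fun k a => ψ a (p k))
    simp only [h1, Finset.prod_const_one] at this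
    exact this.symm
  have hrew : ∀ p : Fin n → Fin ν → ℝ,
      (∑ j : Fin S.card, G (S.equivFin.symm j : Fin n → Fin ν → ℝ) *
        ∏ k, (ψ ((S.equivFin.symm j : Fin n → Fin ν → ℝ) k) (p k) : ℂ))
      = ∑ a ∈ T, (if good a then G a else 0) * (W a p : ℂ) := by
    intro p
    rw [Equiv.sum_comp S.equivFin.symm (fun a : S => G (a : Fin n → Fin ν → ℝ) *
        ∏ k, (ψ ((a : Fin n → Fin ν → ℝ) k) (p k) : ℂ)),
      Finset.sum_coe_sort S (fun a => G a * ∏ k, (ψ (a k) (p k) : ℂ)), Finset.sum_filter]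
    refine Finset.sum_congr rfl fun a _ => ?_
    by_cases h : good a
    · rw [if_pos h, if_pos h]; simp [W]
    · rw [if_neg h, if_neg h]; simp
  refine ⟨S.card, fun j => G (S.equivFin.symm j), 
    fun j k p => (ψ ((S.equivFin.symm j : Fin n → Fin ν → ℝ) k) p : ℂ), ?_, ?_, ?_, ?_, ?_⟩
  · intro j k
    exact Complex.ofRealCLM.contDiff.comp (hsm _)
  · intro j k p l
    simp only [hper]
  · intro j k l hkl p hp q hq
    have hg := (Finset.mem_filter.1 (S.equivFin.symm j).2).2
    have hts : ∀ a, tsupport (fun p => (ψ a p : ℂ)) ⊆ tsupport (ψ a) := by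
      intro a
      refine closure_mono fun x hx => ?_
      intro h; apply hx; simp [h]
    exact hg k l hkl p (hts _ hp) q (hts _ hq)
  · intro C hC p
    rw [hrew]
    calc _ ≤ ∑ a ∈ T, C * W a p := by
          refine norm_sum_le_of_le _ fun a ha => ?_
          rw [norm_mul, Complex.norm_real, Real.norm_of_nonneg (hW0 _ _)]
          refine mul_le_mul_of_nonneg_right ?_ (hW0 _ _)
          have hCa := hC a fun k i => hA _ (Fintype.mem_piFinset.1 ha k) i
          split_ifs
          · exact hCa
          · simpa using (norm_nonneg _).trans hCa
      _ = C := by rw [← Finset.mul_sum, hW1, mul_one]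
  · intro p η hη hsep
    rw [hrew]
    have e : G p = ∑ a ∈ T, G p * (W a p : ℂ) := by
      rw [← Finset.mul_sum, ← Complex.ofReal_sum, hW1]; simp
    rw [e, ← Finset.sum_sub_distrib]
    calc _ ≤ ∑ a ∈ T, η * W a p := by
          refine norm_sum_le_of_le _ fun a ha => ?_
          rw [← sub_mul, norm_mul, Complex.norm_real, Real.norm_of_nonneg (hW0 _ _)]
          by_cases hz : W a p = 0
          · simp [hz]
          refine mul_le_mul_of_nonneg_right ?_ (hW0 _ _)
          have hne : ∀ k, ψ (a k) (p k) ≠ 0 := fun k =>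
            Finset.prod_ne_zero_iff.1 hz k (Finset.mem_univ k)
          have hl := fun k => hsupp (a k) (p k) (subset_tsupport _ (hne k))
          choose l hl using hl
          have hgood : good a := by
            intro k k' hkk x hx y hy
            obtain ⟨lx, hlx⟩ := hsupp _ _ hx
            obtain ⟨ly, hly⟩ := hsupp _ _ hy
            rw [← hV x (l k - lx), ← hV y (l k' - ly)]
            refine hsep _ _ k k' hkk ?_ ?_
            · intro i
              have h1 := abs_le.1 (hlx i)
              have h2 := abs_le.1 (hl k i)
              push_cast [Pi.sub_apply]
              rw [abs_le]; constructor <;> linarith [h1.1, h1.2, h2.1, h2.2]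
            · intro i
              have h1 := abs_le.1 (hly i)
              have h2 := abs_le.1 (hl k' i)
              push_cast [Pi.sub_apply]
              rw [abs_le]; constructor <;> linarith [h1.1, h1.2, h2.1, h2.2]
          rw [if_pos hgood, ← hG a l]
          exact hη _ hl
      _ = η := by rw [← Finset.mul_sum, hW1, mul_one]

theorem aux_pt {ν n : ℕ}
    (V : (Fin ν → ℝ) → ((Fin ν → ℝ) →L[ℝ] ℝ)) (hVc : Continuous V)
    (G : (Fin n → Fin ν → ℝ) → ℂ) (hGc : Continuous G)
    (p : Fin n → Fin ν → ℝ) (hp : ∀ k l, k ≠ l → V (p k) ≠ V (p l)) (η : ℝ) (hη : 0 < η) :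
    ∃ ρ > 0, ∀ r, 0 < r → r < ρ →
      (∀ p' : Fin n → Fin ν → ℝ, (∀ a i, |p a i - p' a i| ≤ r) → ‖G p' - G p‖ ≤ η) ∧
      (∀ x y k l, k ≠ l → (∀ i, |x i - p k i| ≤ 2 * r) → (∀ i, |y i - p l i| ≤ 2 * r) →
            V x ≠ V y) := by
  obtain ⟨ρ1, hρ1, h1⟩ := Metric.continuous_iff.1 hGc p η hη
  have hop : IsOpen {q : Fin n → Fin ν → ℝ | ∀ k l, k ≠ l → V (q k) ≠ V (q l)} := by
    simp only [Set.ofPred_forall]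
    refine isOpen_iInter_of_finite fun k => isOpen_iInter_of_finite fun l =>
      isOpen_iInter_of_finite fun _ => ?_
    exact isOpen_ne_fun (hVc.comp (continuous_apply k)) (hVc.comp (continuous_apply l))
  obtain ⟨ρ2, hρ2, h2⟩ := Metric.isOpen_iff.1 hop p hp
  refine ⟨min ρ1 (ρ2 / 2), by positivity, fun r hr hrρ => ⟨?_, ?_⟩⟩
  · intro p' hp'
    have := h1 p' (lt_of_le_of_lt ?_ (hrρ.trans_le (min_le_left _ _)))
    · rw [dist_eq_norm] at this; exact this.le
    · refine (dist_pi_le_iff hr.le).2 fun a => (dist_pi_le_iff hr.le).2 fun i => ?_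
      rw [dist_comm, Real.dist_eq]; exact hp' a i
  · intro x y k l hkl hx hy
    have hr2 : 2 * r < ρ2 := by linarith [hrρ.trans_le (min_le_right _ _)]
    have := @h2 (fun a => if a = k then x else if a = l then y else p a) ?_ k l hkl
    · simpa [Ne.symm hkl] using this
    · refine lt_of_le_of_lt ?_ hr2
      refine (dist_pi_le_iff (by positivity)).2 fun a => (dist_pi_le_iff (by positivity)).2 fun i => ?_
      rw [Real.dist_eq]
      split_ifs with ha hb
      · subst ha; exact hx i
      · subst hb; exact hy i
      · simp [hr.le]


/-- totality of well-separated wave packets in the `n`-particle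
space.  If `m` is a non-constant real analytic function on the torus, then the
symmetrized products `(f₁⊗⋯⊗f_n)^{sym}` of smooth functions whose supports have
pairwise disjoint velocity sets (`∇m(supp f_k) ∩ ∇m(supp f_l) = ∅` for
`k ≠ l`) are total in the symmetric subspace `Sym^n L²(𝕋^ν)`: every symmetric
(continuous, periodic) function can be `L²`-approximated by finite linear
combinations of such symmetrized products. -/
theorem stmt16
    {ν n : ℕ}
    (m : (Fin ν → ℝ) → ℝ)
    (hmper : ∀ (p : Fin ν → ℝ) (k : Fin ν → ℤ), m (fun i => p i + k i) = m p)
    (hman : ∀ p, AnalyticAt ℝ m p)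
    (hmnc : ∃ p q, m p ≠ m q) :
    ∀ (G : (Fin n → Fin ν → ℝ) → ℂ), Continuous G →
      (∀ (σ : Equiv.Perm (Fin n)) (p : Fin n → Fin ν → ℝ), G (p ∘ σ) = G p) →
      (∀ (p : Fin n → Fin ν → ℝ) (k : Fin n → Fin ν → ℤ),
        G (fun a i => p a i + k a i) = G p) →
      ∀ δ : ℝ, 0 < δ →
      ∃ (N : ℕ) (c : Fin N → ℂ) (f : Fin N → Fin n → (Fin ν → ℝ) → ℂ),
        (∀ j k, ContDiff ℝ (⊤ : ℕ∞) (f j k)) ∧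
        (∀ j k (p : Fin ν → ℝ) (l : Fin ν → ℤ),
          f j k (fun i => p i + l i) = f j k p) ∧
        (∀ j, ∀ k l, k ≠ l → ∀ p ∈ tsupport (f j k), ∀ q ∈ tsupport (f j l),
          fderiv ℝ m p ≠ fderiv ℝ m q) ∧
        eLpNorm
          (fun p : Fin n → Fin ν → ℝ =>
            G p - ∑ j, c j * ∑ σ : Equiv.Perm (Fin n), ∏ k, f j k (p (σ k)))
          2 ((volume : Measure (Fin n → Fin ν → ℝ)).restrict
              {p | ∀ a i, p a i ∈ Set.Icc (0:ℝ) 1})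
          < ENNReal.ofReal δ := by
  intro G hGc hGs hGp δ hδ
  have hVc : Continuous (fderiv ℝ m) :=
    continuous_iff_continuousAt.2 fun x => (hman x).fderiv.continuousAt
  have hr : ∀ N : ℕ, (0:ℝ) < 1 / ((N:ℝ) + 1) := fun N => Nat.one_div_pos_of_nat
  choose M c f hsm hper hsep hbd happ using fun N : ℕ =>
    aux_approx (fderiv ℝ m) (aux_fder_per m hmper) G hGp _ (hr N)
  let H : ℕ → (Fin n → Fin ν → ℝ) → ℂ := fun N p => ∑ j, c N j * ∏ k, f N j k (p k)
  have hHc : ∀ N, Continuous (H N) := by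
    intro N
    refine continuous_finsetSum _ fun j _ => continuous_const.mul ?_
    exact continuous_finsetProd _ fun k _ => (hsm N j k).continuous.comp (continuous_apply k)
  have hHt : ∀ p : Fin n → Fin ν → ℝ, (∀ k l, k ≠ l → fderiv ℝ m (p k) ≠ fderiv ℝ m (p l)) →
      Filter.Tendsto (fun N => H N p) Filter.atTop (nhds (G p)) := by
    intro p hp
    rw [Metric.tendsto_atTop]
    intro η hη
    obtain ⟨ρ, hρ, h⟩ := aux_pt (fderiv ℝ m) hVc G hGc p hp (η / 2) (by positivity)
    obtain ⟨N0, hN0⟩ := exists_nat_one_div_lt hρ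
    refine ⟨N0, fun N hN => ?_⟩
    obtain ⟨ha, hb⟩ := h _ (hr N) (lt_of_le_of_lt (Nat.one_div_le_one_div hN) hN0)
    have := happ N p (η / 2) ha hb
    rw [dist_eq_norm]
    exact lt_of_le_of_lt this (by linarith)
  let Q : Set (Fin n → Fin ν → ℝ) := {p | ∀ a i, p a i ∈ Set.Icc (0:ℝ) 1}
  have hQ : Q = Set.Icc 0 1 := by
    ext p
    simp only [Q, Set.mem_ofPred_eq, Set.mem_Icc, Pi.le_def, Pi.zero_apply, Pi.one_apply]
    exact ⟨fun h => ⟨fun a i => (h a i).1, fun a i => (h a i).2⟩, fun h a i => ⟨h.1 a i, h.2 a i⟩⟩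
  have hQc : IsCompact Q := hQ ▸ isCompact_Icc
  obtain ⟨C, hC⟩ := hQc.exists_bound_of_continuousOn hGc.continuousOn
  have hfact : ((Nat.factorial n : ℕ) : ℂ) ≠ 0 := by exact_mod_cast Nat.factorial_ne_zero n
  let K : ℕ → (Fin n → Fin ν → ℝ) → ℂ := fun N p =>
    ((Nat.factorial n : ℕ) : ℂ)⁻¹ * ∑ σ : Equiv.Perm (Fin n), H N (p ∘ σ)
  have hKc : ∀ N, Continuous (K N) := by
    intro N
    refine continuous_const.mul (continuous_finsetSum _ fun σ _ => (hHc N).comp ?_)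
    exact continuous_pi fun a => continuous_apply (σ a)
  have hKt : ∀ p : Fin n → Fin ν → ℝ, (∀ k l, k ≠ l → fderiv ℝ m (p k) ≠ fderiv ℝ m (p l)) →
      Filter.Tendsto (fun N => K N p) Filter.atTop (nhds (G p)) := by
    intro p hp
    have h1 : Filter.Tendsto (fun N => K N p) Filter.atTop
        (nhds (((Nat.factorial n : ℕ) : ℂ)⁻¹ * ∑ σ : Equiv.Perm (Fin n), G (p ∘ σ))) := by
      refine Filter.Tendsto.const_mul _ (tendsto_finsetSum _ fun σ _ => hHt _ ?_)
      intro k l hkl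
      exact hp _ _ (fun h => hkl (σ.injective h))
    have h2 : ((Nat.factorial n : ℕ) : ℂ)⁻¹ * ∑ σ : Equiv.Perm (Fin n), G (p ∘ σ) = G p := by
      simp only [hGs, Finset.sum_const, Finset.card_univ, Fintype.card_perm, Fintype.card_fin,
        nsmul_eq_mul]
      rw [inv_mul_cancel_left₀ hfact]
    rwa [h2] at h1
  have hKb : ∀ N p, ‖K N p‖ ≤ C := by
    intro N p
    have h1 : ‖∑ σ : Equiv.Perm (Fin n), H N (p ∘ σ)‖ ≤ (Nat.factorial n : ℕ) * C := by
      refine (norm_sum_le_of_le (n := fun _ => C) Finset.univ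
        (fun (σ : Equiv.Perm (Fin n)) _ => (hbd N C hC (p ∘ σ) : ‖H N (p ∘ σ)‖ ≤ C))).trans ?_
      simp [Fintype.card_perm]
    have hf : (0:ℝ) < (Nat.factorial n : ℕ) := by exact_mod_cast Nat.factorial_pos n
    rw [norm_mul, norm_inv, Complex.norm_natCast, inv_mul_le_iff₀ hf]
    exact h1
  let μ := (volume : Measure (Fin n → Fin ν → ℝ)).restrict Q
  have hfin : IsFiniteMeasure μ := ⟨by simpa [μ] using hQc.measure_lt_top⟩
  have hlim : Filter.Tendsto (fun N => ∫⁻ p, ‖G p - K N p‖ₑ ^ (2:ℝ) ∂μ) Filter.atTop (nhds 0) := by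
    have h := tendsto_lintegral_of_dominated_convergence (μ := μ)
      (F := fun N p => ‖G p - K N p‖ₑ ^ (2:ℝ)) (f := fun _ => 0)
      (fun _ => ENNReal.ofReal (C + C) ^ (2:ℝ)) ?_ ?_ ?_ ?_
    · simpa using h
    · intro N
      have : Continuous fun p => G p - K N p := hGc.sub (hKc N)
      exact (this.measurable.enorm).pow_const _
    · intro N
      filter_upwards [ae_restrict_mem hQc.measurableSet] with p hp
      refine ENNReal.rpow_le_rpow ?_ (by norm_num)
      rw [← ofReal_norm]
      exact ENNReal.ofReal_le_ofReal ((norm_sub_le _ _).trans (add_le_add (hC p hp) (hKb N p)))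
    · rw [lintegral_const]
      exact ENNReal.mul_ne_top (ENNReal.rpow_ne_top_of_nonneg (by norm_num) ENNReal.ofReal_ne_top)
        (measure_ne_top μ _)
    · filter_upwards [ae_restrict_of_ae (aux_ae (n := n) m hmper hman hmnc)] with p hp
      have h1 : Filter.Tendsto (fun N => G p - K N p) Filter.atTop (nhds 0) := by
        simpa using (tendsto_const_nhds (x := G p)).sub (hKt p hp)
      have h2 := (ENNReal.continuous_rpow_const (y := 2)).tendsto _ |>.comp h1.enorm
      simpa [Function.comp_def] using h2
  have hlim2 : Filter.Tendsto (fun N => eLpNorm (fun p => G p - K N p) 2 μ) Filter.atTop (nhds 0) := by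
    have h2 := (ENNReal.continuous_rpow_const (y := 1 / 2)).tendsto _ |>.comp hlim
    simp only [Function.comp_def] at h2
    rw [ENNReal.zero_rpow_of_pos (by norm_num)] at h2
    refine h2.congr fun N => ?_
    rw [eLpNorm_eq_lintegral_rpow_enorm_toReal (by norm_num) (by norm_num)]
    simp
  obtain ⟨N, hN⟩ := (hlim2.eventually_lt_const (ENNReal.ofReal_pos.2 hδ)).exists
  refine ⟨M N, fun j => ((Nat.factorial n : ℕ) : ℂ)⁻¹ * c N j, f N, hsm N, hper N, hsep N, ?_⟩
  have hKe : ∀ p, K N p = ∑ j, ((Nat.factorial n : ℕ) : ℂ)⁻¹ * c N j *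
      ∑ σ : Equiv.Perm (Fin n), ∏ k, f N j k (p (σ k)) := by
    intro p
    simp only [K, H, Function.comp_apply]
    rw [Finset.sum_comm, Finset.mul_sum]
    refine Finset.sum_congr rfl fun j _ => ?_
    rw [← Finset.mul_sum, mul_assoc]
  simp only [← hKe]
  exact hN
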